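/- arXiv:0710.5350 — 2 statements merged into one kernel-verified Lean document; each statement's English description precedes it below -/
import Mathlib

section
/- Let W_4 be the 4×4 matrix with rows (3,3,1,−1), (3,−1,1,3), (3,−1,1,−1), (1,1,−1,1), and let Z_{w,4} = Σ_{i,j} [W_4]_{ij} Π_i⊗Π_j (first Bell projector on qubits A'B', second on A''B''). Then Z_{w,4} is an entanglement witness for the partition A=(A',A''), B=(B',B''): tr(Z_{w,4} ρ) ≥ 0 for every 16×16 matrix ρ that is separable across this partition. -/
open Matrix Complex
open scoped Kronecker ComplexOrder

noncomputable section
namespace Paper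

abbrev Q2 := Fin 2 × Fin 2
abbrev M4 := Matrix Q2 Q2 ℂ
abbrev M16 := Matrix (Q2 × Q2) (Q2 × Q2) ℂ

/-- `1/√2` as a complex number. -/
def invSqrt2 : ℂ := ((Real.sqrt 2)⁻¹ : ℝ)

/-- The four Bell states `|Φ₁⟩,…,|Φ₄⟩` as vectors in `ℂ²⊗ℂ²`
(product basis indexed by `Fin 2 × Fin 2`). -/
def bell : Fin 4 → Q2 → ℂ :=
  ![fun p => !![invSqrt2, 0; 0, invSqrt2] p.1 p.2,
    fun p => !![invSqrt2, 0; 0, -invSqrt2] p.1 p.2,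
    fun p => !![0, invSqrt2; invSqrt2, 0] p.1 p.2,
    fun p => !![0, invSqrt2; -invSqrt2, 0] p.1 p.2]

/-- The Bell projectors `Π_i = |Φ_i⟩⟨Φ_i|`. -/
def BellProj (i : Fin 4) : M4 := vecMulVec (bell i) (star (bell i))

/-- The Pauli matrices `σ_x, σ_y, σ_z`. -/
def pauli : Fin 3 → Matrix (Fin 2) (Fin 2) ℂ :=
  ![!![0, 1; 1, 0], !![0, -I; I, 0], !![1, 0; 0, -1]]

/-- Reindexing `((a',b'),(a'',b'')) ↦ ((a',a''),(b',b''))`. -/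
def swapMid : (Q2 × Q2) ≃ (Q2 × Q2) where
  toFun p := ((p.1.1, p.2.1), (p.1.2, p.2.2))
  invFun p := ((p.1.1, p.2.1), (p.1.2, p.2.2))
  left_inv _ := rfl
  right_inv _ := rfl

/-- The rank-one matrix `x x†`. -/
def pureMat {d : Type*} (x : d → ℂ) : Matrix d d ℂ := vecMulVec x (star x)

/-- Separability of a 16×16 four-qubit matrix (qubit order A',B',A'',B'')
across the partition A = (A',A''), B = (B',B''). -/
def SepAB (ρ : M16) : Prop :=
  ∃ (n : ℕ) (x y : Fin n → Q2 → ℂ),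
    (Matrix.reindex swapMid swapMid ρ) = ∑ k, (pureMat (x k)) ⊗ₖ (pureMat (y k))


/-- The witness matrix `W4`. -/
def W4 : Matrix (Fin 4) (Fin 4) ℝ :=
  !![3, 3, 1, -1; 3, -1, 1, 3; 3, -1, 1, -1; 1, 1, -1, 1]

def nn (u : Q2 → ℂ) : ℝ := normSq (u (0,0)) + normSq (u (0,1)) + normSq (u (1,0)) + normSq (u (1,1))

def cr (a b : ℂ) : ℝ := a.re * b.re + a.im * b.im
def ci (a b : ℂ) : ℝ := a.re * b.im - a.im * b.re

/-- The ten Pauli expectation values (the so(5) part). -/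
def pv (u : Q2 → ℂ) : Fin 10 → ℝ :=
  ![2 * (cr (u (0,0)) (u (0,1)) + cr (u (1,0)) (u (1,1))),
    2 * (ci (u (0,0)) (u (0,1)) + ci (u (1,0)) (u (1,1))),
    normSq (u (0,0)) - normSq (u (0,1)) + normSq (u (1,0)) - normSq (u (1,1)),
    normSq (u (0,0)) + normSq (u (0,1)) - normSq (u (1,0)) - normSq (u (1,1)),
    2 * (cr (u (0,0)) (u (1,1)) + cr (u (0,1)) (u (1,0))),
    2 * (-cr (u (0,0)) (u (1,1)) + cr (u (0,1)) (u (1,0))),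
    2 * (ci (u (0,0)) (u (1,1)) - ci (u (0,1)) (u (1,0))),
    2 * (ci (u (0,0)) (u (1,1)) + ci (u (0,1)) (u (1,0))),
    2 * (cr (u (0,0)) (u (1,0)) - cr (u (0,1)) (u (1,1))),
    2 * (ci (u (0,0)) (u (1,0)) - ci (u (0,1)) (u (1,1)))]

def sg : Fin 10 → ℝ := ![1, -1, 1, 1, 1, -1, 1, 1, 1, -1]

lemma pv_sq (u : Q2 → ℂ) : ∑ i, pv u i ^ 2 = 2 * nn u ^ 2 := by
  simp only [Fin.sum_univ_succ, pv, nn, cr, ci, normSq_apply]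
  simp
  ring

lemma sg_sq (i : Fin 10) : sg i ^ 2 = 1 := by
  fin_cases i <;> simp [sg]

lemma nn_nonneg (u : Q2 → ℂ) : 0 ≤ nn u := by
  unfold nn
  have := fun p => normSq_nonneg (u p)
  linarith [this (0,0), this (0,1), this (1,0), this (1,1)]

lemma main_nonneg (x y : Q2 → ℂ) : 0 ≤ 2 * nn x * nn y + ∑ i, (sg i * pv x i) * pv y i := by
  have h := Finset.sum_mul_sq_le_sq_mul_sq Finset.univ (fun i => sg i * pv x i) (pv y)
  have h1 : ∑ i, (sg i * pv x i) ^ 2 = 2 * nn x ^ 2 := by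
    rw [← pv_sq]
    simp only [mul_pow, sg_sq, one_mul]
  rw [h1, pv_sq] at h
  have h2 := abs_le_of_sq_le_sq' (a := ∑ i, (sg i * pv x i) * pv y i) (b := 2 * nn x * nn y) (by linarith)
    (by have := nn_nonneg x; have := nn_nonneg y; positivity)
  linarith [h2.1]

/-- Unnormalised real Bell coefficients. -/
def bc : Fin 4 → Q2 → ℝ :=
  ![fun p => !![1, 0; 0, 1] p.1 p.2,
    fun p => !![1, 0; 0, -1] p.1 p.2,
    fun p => !![0, 1; 1, 0] p.1 p.2,
    fun p => !![0, 1; -1, 0] p.1 p.2]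

lemma bell_eq (i : Fin 4) (p : Q2) : bell i p = invSqrt2 * (bc i p : ℂ) := by
  obtain ⟨a, b⟩ := p
  fin_cases i <;> fin_cases a <;> fin_cases b <;> simp [bell, bc]

lemma inv_sq : invSqrt2 * invSqrt2 = ((1/2 : ℝ) : ℂ) := by
  unfold invSqrt2
  rw [← ofReal_mul, ← mul_inv, Real.mul_self_sqrt (by norm_num)]
  norm_num

def bv (i j : Fin 4) : Q2 × Q2 → ℂ := fun p => bell i p.1 * bell j p.2
def xy (x y : Q2 → ℂ) : Q2 × Q2 → ℂ := fun p => x (p.1.1, p.2.1) * y (p.1.2, p.2.2)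

/-- Twice the amplitude. -/
def amp (i j : Fin 4) (x y : Q2 → ℂ) : ℂ :=
  ∑ p : Q2 × Q2, ((bc i p.1 * bc j p.2 : ℝ) : ℂ) * xy x y p

lemma bv_eq (i j : Fin 4) (p : Q2 × Q2) :
    bv i j p = ((1/2 * (bc i p.1 * bc j p.2) : ℝ) : ℂ) := by
  unfold bv
  rw [bell_eq, bell_eq, ofReal_mul, ← inv_sq]
  push_cast
  ring

lemma kron_eq (i j : Fin 4) : BellProj i ⊗ₖ BellProj j = pureMat (bv i j) := by
  ext p q
  simp [BellProj, pureMat, bv, vecMulVec_apply, kroneckerMap_apply]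
  ring

lemma tr_term (i j : Fin 4) (x y : Q2 → ℂ) :
    (pureMat (bv i j) * pureMat (xy x y)).trace = ((1/4 * normSq (amp i j x y) : ℝ) : ℂ) := by
  have h : star (bv i j) ⬝ᵥ xy x y = (1/2 : ℂ) * amp i j x y := by
    simp only [dotProduct, amp, Finset.mul_sum, Pi.star_apply, bv_eq]
    refine Finset.sum_congr rfl fun p _ => ?_
    simp only [RCLike.star_def, conj_ofReal]
    push_cast
    ring
  have h' : star (xy x y) ⬝ᵥ bv i j = star ((1/2 : ℂ) * amp i j x y) := by
    rw [← h, star_dotProduct, dotProduct_comm]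
  unfold pureMat
  rw [vecMulVec_mul_vecMulVec, trace_vecMulVec, dotProduct_smul, h]
  rw [dotProduct_comm, h', ofReal_mul, ← mul_conj]
  simp
  ring

def tt : Fin 4 → Fin 2 := ![0, 0, 1, 1]
def ss : Fin 4 → ℝ := ![1, -1, 1, -1]

lemma bc_sum (i : Fin 4) (f : Q2 → ℂ) : ∑ p, (bc i p : ℂ) * f p =
    f (0, tt i) + (ss i : ℂ) * f (1, 1 - tt i) := by
  fin_cases i <;> simp [Fintype.sum_prod_type, bc, tt, ss]

lemma amp_eq (i j : Fin 4) (x y : Q2 → ℂ) : amp i j x y =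
    x (0,0) * y (tt i, tt j) + (ss j : ℂ) * (x (0,1) * y (tt i, 1 - tt j)) +
    (ss i : ℂ) * (x (1,0) * y (1 - tt i, tt j) +
      (ss j : ℂ) * (x (1,1) * y (1 - tt i, 1 - tt j))) := by
  unfold amp
  rw [Fintype.sum_prod_type]
  simp only [ofReal_mul, mul_assoc, ← Finset.mul_sum]
  simp only [bc_sum, xy]

lemma amp_sum (x y : Q2 → ℂ) : ∑ i, ∑ j, W4 i j * (1/4 * normSq (amp i j x y)) =
    1/2 * (2 * nn x * nn y + ∑ i, (sg i * pv x i) * pv y i) := by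
  have e : (1 : Fin 2) - 1 = 0 := rfl
  have e' : (1 : Fin 2) - 0 = 1 := rfl
  have l : ∀ i j, normSq (amp i j x y) = 
    (x (0,0) * y (tt i, tt j) + (ss j : ℂ) * (x (0,1) * y (tt i, 1 - tt j)) +
    (ss i : ℂ) * (x (1,0) * y (1 - tt i, tt j) +
      (ss j : ℂ) * (x (1,1) * y (1 - tt i, 1 - tt j)))).re ^ 2 + 
    (x (0,0) * y (tt i, tt j) + (ss j : ℂ) * (x (0,1) * y (tt i, 1 - tt j)) +
    (ss i : ℂ) * (x (1,0) * y (1 - tt i, tt j) +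
      (ss j : ℂ) * (x (1,1) * y (1 - tt i, 1 - tt j)))).im ^ 2 := by
    intro i j
    rw [amp_eq, normSq_apply]; ring
  simp only [l, add_re, add_im, re_ofReal_mul, im_ofReal_mul, mul_re, mul_im]
  simp only [Fin.sum_univ_four]
  simp [W4, tt, ss, e, e', -mul_eq_mul_left_iff]
  simp [Fin.sum_univ_succ, sg, pv, nn, cr, ci, normSq_apply, -mul_eq_mul_left_iff]
  ring

theorem stmt8 (ρ : M16) (hρ : SepAB ρ) :
    0 ≤ ((∑ i, ∑ j, (W4 i j : ℂ) • (BellProj i ⊗ₖ BellProj j)) * ρ).trace := by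
  obtain ⟨n, x, y, h⟩ := hρ
  have hr : ρ = ∑ k, pureMat (xy (x k) (y k)) := by
    ext p q
    have := congrFun (congrFun h (swapMid p)) (swapMid q)
    simp only [reindex_apply, submatrix_apply, Equiv.symm_apply_apply] at this
    rw [this]
    simp only [Matrix.sum_apply]
    refine Finset.sum_congr rfl fun k _ => ?_
    simp [pureMat, xy, swapMid, vecMulVec_apply, kroneckerMap_apply]
    ring
  rw [hr, Finset.mul_sum, trace_sum]
  refine Finset.sum_nonneg fun k _ => ?_
  have e : ((∑ i, ∑ j, (W4 i j : ℂ) • (BellProj i ⊗ₖ BellProj j)) *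
      pureMat (xy (x k) (y k))).trace =
      ((∑ i, ∑ j, W4 i j * (1/4 * normSq (amp i j (x k) (y k))) : ℝ) : ℂ) := by
    simp only [Finset.sum_mul, trace_sum, smul_mul_assoc, trace_smul, kron_eq, tr_term]
    push_cast
    simp only [smul_eq_mul]
  rw [e, amp_sum]
  have := main_nonneg (x k) (y k)
  exact_mod_cast (by linarith : (0:ℝ) ≤ 1/2 * (2 * nn (x k) * nn (y k) + ∑ i, (sg i * pv (x k) i) * pv (y k) i))

end Paper
end
end

section
/- If the real 4×4 matrix r belongs to the polytope 𝒫_s, then the 16×16 matrix ρ = Σ_{i,j} r_{ij} Π_i⊗Π_j (first Bell projector on qubits A'B', second on A''B'') is separable across the partition A=(A',A''), B=(B',B''). -/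
open Matrix Complex
open scoped Kronecker ComplexOrder

noncomputable section
namespace Paper

/-- The matrix `D₀ = (1/4)·I₄`. -/
def D0 : Matrix (Fin 4) (Fin 4) ℝ := (1 / 4 : ℝ) • 1

/-- The matrix `G₀` with entries `1/4` for `i,j ∈ {1,2}` and `0` otherwise. -/
def G0 : Matrix (Fin 4) (Fin 4) ℝ :=
  !![1/4, 1/4, 0, 0; 1/4, 1/4, 0, 0; 0, 0, 0, 0; 0, 0, 0, 0]

/-- The polytope `𝒫_s`: the convex hull of all matrices obtained from `D₀` or `G₀`
by independently permuting rows and columns. -/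
def Ps : Set (Matrix (Fin 4) (Fin 4) ℝ) :=
  convexHull ℝ
    {M | ∃ σ τ : Equiv.Perm (Fin 4),
      (M = fun i j => D0 (σ i) (τ j)) ∨ (M = fun i j => G0 (σ i) (τ j))}

lemma sep_of {ι : Type} [Fintype ι] (ρ : M16) (x y : ι → Q2 → ℂ)
    (h : Matrix.reindex swapMid swapMid ρ = ∑ k, (pureMat (x k)) ⊗ₖ (pureMat (y k))) :
    SepAB ρ := by
  refine ⟨Fintype.card ι, x ∘ (Fintype.equivFin ι).symm, y ∘ (Fintype.equivFin ι).symm, ?_⟩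
  rw [h]
  exact (Equiv.sum_comp (Fintype.equivFin ι).symm
    (fun k => (pureMat (x k)) ⊗ₖ (pureMat (y k)))).symm

lemma sep_add {ρ ρ' : M16} (h : SepAB ρ) (h' : SepAB ρ') : SepAB (ρ + ρ') := by
  obtain ⟨n, x, y, h⟩ := h
  obtain ⟨m, x', y', h'⟩ := h'
  refine sep_of (ι := Fin n ⊕ Fin m) _ (Sum.elim x x') (Sum.elim y y') ?_
  rw [Fintype.sum_sum_type]
  simp only [Sum.elim_inl, Sum.elim_inr]
  rw [← h, ← h']
  rfl

lemma pure_smul {d : Type} (c : ℝ) (hc : 0 ≤ c) (x : d → ℂ) :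
    pureMat (((Real.sqrt c : ℝ) : ℂ) • x) = (c : ℂ) • pureMat x := by
  have h : (c : ℂ) = (Real.sqrt c : ℂ) * (Real.sqrt c : ℂ) := by
    rw [← Complex.ofReal_mul, Real.mul_self_sqrt hc]
  ext i j
  simp only [pureMat, vecMulVec_apply, Pi.smul_apply, Pi.star_apply, smul_eq_mul,
    Matrix.smul_apply, star_mul', RCLike.star_def, Complex.conj_ofReal]
  rw [h]; ring

lemma sep_smul {ρ : M16} (c : ℝ) (hc : 0 ≤ c) (h : SepAB ρ) : SepAB ((c : ℂ) • ρ) := by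
  obtain ⟨n, x, y, h⟩ := h
  refine ⟨n, fun k => ((Real.sqrt c : ℝ) : ℂ) • x k, y, ?_⟩
  have : Matrix.reindex swapMid swapMid ((c : ℂ) • ρ)
    = (c : ℂ) • Matrix.reindex swapMid swapMid ρ := rfl
  rw [this, h, Finset.smul_sum]
  refine Finset.sum_congr rfl fun k _ => ?_
  rw [pure_smul c hc, smul_kronecker]

lemma pure_conj {d : Type} [Fintype d] (A : Matrix d d ℂ) (x : d → ℂ) :
    pureMat (A *ᵥ x) = A * pureMat x * Aᴴ := by
  simp only [pureMat, mul_vecMulVec, vecMulVec_mul, star_mulVec]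

abbrev M2 := Matrix (Fin 2) (Fin 2) ℂ

lemma reindex_kron (U1 V1 U2 V2 : M2) :
    Matrix.reindex swapMid swapMid ((U1 ⊗ₖ V1) ⊗ₖ (U2 ⊗ₖ V2)) = (U1 ⊗ₖ U2) ⊗ₖ (V1 ⊗ₖ V2) := by
  ext ⟨⟨a, b⟩, ⟨c, d⟩⟩ ⟨⟨a', b'⟩, ⟨c', d'⟩⟩
  simp [swapMid, kroneckerMap_apply]
  ring

lemma sep_conj {ρ : M16} (U1 V1 U2 V2 : M2) (h : SepAB ρ) :
    SepAB (((U1 ⊗ₖ V1) ⊗ₖ (U2 ⊗ₖ V2)) * ρ * ((U1 ⊗ₖ V1) ⊗ₖ (U2 ⊗ₖ V2))ᴴ) := by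
  obtain ⟨n, x, y, h⟩ := h
  refine ⟨n, fun k => (U1 ⊗ₖ U2) *ᵥ x k, fun k => (V1 ⊗ₖ V2) *ᵥ y k, ?_⟩
  have e : ∀ A B : M16, Matrix.reindex swapMid swapMid (A * B)
      = Matrix.reindex swapMid swapMid A * Matrix.reindex swapMid swapMid B := by
    intro A B
    simp only [Matrix.reindex_apply, submatrix_mul_equiv]
  rw [e, e, ← conjTranspose_reindex, reindex_kron, h, Finset.mul_sum, Finset.sum_mul]
  refine Finset.sum_congr rfl fun k _ => ?_
  rw [pure_conj, pure_conj, conjTranspose_kronecker, mul_kronecker_mul, mul_kronecker_mul]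

/-- permutations implemented by local operators -/
def Good (σ : Equiv.Perm (Fin 4)) : Prop :=
  ∃ U V : M2, ∀ i, BellProj (σ i) = (U ⊗ₖ V) * BellProj i * (U ⊗ₖ V)ᴴ

lemma good_of (σ : Equiv.Perm (Fin 4)) (U V : M2) (c : Fin 4 → ℂ) (hc : ∀ i, c i * star (c i) = 1)
    (h : ∀ i, (U ⊗ₖ V) *ᵥ bell i = c i • bell (σ i)) : Good σ := by
  refine ⟨U, V, fun i => ?_⟩
  have := pure_conj (U ⊗ₖ V) (bell i)
  rw [h] at this
  change _ = _ * pureMat (bell i) * _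
  rw [← this]
  ext a b
  simp only [BellProj, pureMat, vecMulVec_apply, Pi.smul_apply, Pi.star_apply, smul_eq_mul,
    star_mul']
  linear_combination (-(bell (σ i) a * star (bell (σ i) b))) * hc i

lemma s_sq : invSqrt2 * invSqrt2 = 1 / 2 := by
  unfold invSqrt2
  rw [← Complex.ofReal_mul, ← mul_inv, Real.mul_self_sqrt (by norm_num)]
  norm_num

lemma s_star : (starRingEnd ℂ) invSqrt2 = invSqrt2 := by
  unfold invSqrt2
  rw [Complex.conj_ofReal]

lemma good_one : Good 1 :=
  good_of 1 1 1 (fun _ => 1) (by simp) (by simp)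

lemma good_mul {σ τ} (h : Good σ) (h' : Good τ) : Good (σ * τ) := by
  obtain ⟨U, V, h⟩ := h
  obtain ⟨U', V', h'⟩ := h'
  refine ⟨U * U', V * V', fun i => ?_⟩
  rw [Equiv.Perm.mul_apply, h, h', mul_kronecker_mul, conjTranspose_mul]
  simp only [Matrix.mul_assoc]

lemma good_01 : Good (Equiv.swap 0 1) := by
  refine good_of _ !![1, 0; 0, I] !![1, 0; 0, I] ![1, 1, I, I] ?_ ?_
  · intro i; fin_cases i <;> simp
  · intro i; ext ⟨a, b⟩
    fin_cases i <;> fin_cases a <;> fin_cases b <;>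
      simp [bell, mulVec, dotProduct, Fintype.sum_prod_type, kroneckerMap_apply, Equiv.swap_apply_def]

lemma good_12 : Good (Equiv.swap 1 2) := by
  refine good_of _ !![invSqrt2, invSqrt2; invSqrt2, -invSqrt2]
    !![invSqrt2, invSqrt2; invSqrt2, -invSqrt2] ![1, 1, 1, -1] ?_ ?_
  · intro i; fin_cases i <;> simp
  · have := s_sq
    intro i; ext ⟨a, b⟩
    fin_cases i <;> fin_cases a <;> fin_cases b <;>
      simp [bell, mulVec, dotProduct, Fintype.sum_prod_type, kroneckerMap_apply,
        Equiv.swap_apply_def, s_sq] <;> ring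

lemma good_23 : Good (Equiv.swap 2 3) := by
  refine good_of _ !![1, 0; 0, I] !![1, 0; 0, -I] ![1, 1, -I, -I] ?_ ?_
  · intro i; fin_cases i <;> simp
  · intro i; ext ⟨a, b⟩
    fin_cases i <;> fin_cases a <;> fin_cases b <;>
      simp [bell, mulVec, dotProduct, Fintype.sum_prod_type, kroneckerMap_apply, Equiv.swap_apply_def]

lemma good_all (σ : Equiv.Perm (Fin 4)) : Good σ := by
  have h : σ ∈ Submonoid.closure (Set.range fun i : Fin 3 => Equiv.swap i.castSucc i.succ) := by
    rw [Equiv.Perm.mclosure_swap_castSucc_succ]; trivial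
  induction h using Submonoid.closure_induction with
  | mem x hx =>
    obtain ⟨i, rfl⟩ := hx
    fin_cases i
    · exact good_01
    · exact good_12
    · exact good_23
  | one => exact good_one
  | mul x y _ _ hx hy => exact good_mul hx hy

/-- the Bell-diagonal matrix -/
def rho (r : Matrix (Fin 4) (Fin 4) ℝ) : M16 :=
  ∑ i, ∑ j, (r i j : ℂ) • (BellProj i ⊗ₖ BellProj j)

lemma sep_perm (M : Matrix (Fin 4) (Fin 4) ℝ) (h : SepAB (rho M)) (σ τ : Equiv.Perm (Fin 4)) :
    SepAB (rho fun i j => M (σ i) (τ j)) := by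
  obtain ⟨U, V, h1⟩ := good_all σ⁻¹
  obtain ⟨U', V', h2⟩ := good_all τ⁻¹
  have := sep_conj U V U' V' h
  convert this using 1
  unfold rho
  rw [← Equiv.sum_comp σ⁻¹]
  simp only [Finset.mul_sum, Finset.sum_mul]
  refine Finset.sum_congr rfl fun i _ => ?_
  rw [← Equiv.sum_comp τ⁻¹]
  refine Finset.sum_congr rfl fun j _ => ?_
  rw [h1, h2]
  simp only [show σ (σ⁻¹ i) = i from σ.apply_symm_apply i,
    show τ (τ⁻¹ j) = j from τ.apply_symm_apply j, conjTranspose_kronecker _ (U' ⊗ₖ V'), mul_kronecker_mul,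
    Matrix.mul_smul, Matrix.smul_mul]

lemma sep_G0 : SepAB (rho G0) := by
  have key : BellProj 0 + BellProj 1 =
      ∑ a : Fin 2, pureMat (Pi.single a 1) ⊗ₖ pureMat (Pi.single a 1) := by
    ext ⟨a, b⟩ ⟨c, d⟩
    fin_cases a <;> fin_cases b <;> fin_cases c <;> fin_cases d <;>
      simp [BellProj, bell, pureMat, vecMulVec_apply, s_star, s_sq, kroneckerMap_apply] <;> norm_num
  have e : rho G0 = ((1 / 4 : ℝ) : ℂ) • ((BellProj 0 + BellProj 1) ⊗ₖ (BellProj 0 + BellProj 1)) := by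
    ext p q
    simp [rho, G0, Fin.sum_univ_four, kroneckerMap_apply]
    ring
  rw [e, key]
  refine sep_smul _ (by norm_num) ?_
  refine sep_of (ι := Fin 2 × Fin 2) _
    (fun k p => Pi.single (M := fun _ => ℂ) k.1 1 p.1 * Pi.single (M := fun _ => ℂ) k.2 1 p.2)
    (fun k p => Pi.single (M := fun _ => ℂ) k.1 1 p.1 * Pi.single (M := fun _ => ℂ) k.2 1 p.2) ?_
  ext ⟨⟨a, b⟩, ⟨c, d⟩⟩ ⟨⟨a', b'⟩, ⟨c', d'⟩⟩
  simp only [Fintype.sum_prod_type, Fin.sum_univ_two, pureMat, Matrix.reindex_apply, submatrix_apply, swapMid,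
    Matrix.add_apply, kroneckerMap_apply, vecMulVec_apply, Pi.star_apply, star_mul', Equiv.coe_fn_symm_mk]
  ring

set_option maxHeartbeats 8000000 in
lemma sep_D0 : SepAB (rho D0) := by
  have e : rho D0 = ((1 / 4 : ℝ) : ℂ) • ∑ i, BellProj i ⊗ₖ BellProj i := by
    ext p q
    simp [rho, D0, Fin.sum_univ_four, Matrix.one_apply, kroneckerMap_apply]
    ring
  rw [e]
  refine sep_smul _ (by norm_num) ?_
  refine sep_of (ι := Fin 4) _ bell bell ?_
  ext ⟨⟨a, b⟩, ⟨c, d⟩⟩ ⟨⟨a', b'⟩, ⟨c', d'⟩⟩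
  simp only [Fin.sum_univ_four, pureMat, BellProj, Matrix.reindex_apply, submatrix_apply, swapMid,
    Matrix.add_apply, kroneckerMap_apply, vecMulVec_apply, Pi.star_apply, Equiv.coe_fn_symm_mk]
  fin_cases a <;> fin_cases b <;> fin_cases c <;> fin_cases d <;>
    fin_cases a' <;> fin_cases b' <;> fin_cases c' <;> fin_cases d' <;>
    simp [bell, s_star]

/-- if `r ∈ 𝒫_s`, then `ρ = Σ_{ij} r_{ij} Π_i⊗Π_j` is separable across
the partition A = (A',A''), B = (B',B''). -/
theorem stmt9 (r : Matrix (Fin 4) (Fin 4) ℝ) (hr : r ∈ Ps) :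
    SepAB (∑ i, ∑ j, (r i j : ℂ) • (BellProj i ⊗ₖ BellProj j)) := by
  change SepAB (rho r)
  have hc : Convex ℝ {r | SepAB (rho r)} := by
    intro r hr r' hr' a b ha hb _
    have : rho (a • r + b • r') = (a : ℂ) • rho r + (b : ℂ) • rho r' := by
      simp only [rho, Matrix.add_apply, Matrix.smul_apply, smul_eq_mul, Complex.ofReal_add,
        Complex.ofReal_mul, add_smul, mul_smul, Finset.sum_add_distrib, Finset.smul_sum]
    change SepAB (rho (a • r + b • r'))
    rw [this]
    exact sep_add (sep_smul a ha hr) (sep_smul b hb hr')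
  refine convexHull_min ?_ hc hr
  rintro M ⟨σ, τ, rfl | rfl⟩
  · exact sep_perm D0 sep_D0 σ τ
  · exact sep_perm G0 sep_G0 σ τ

end Paper
end
end
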